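/- arXiv:1511.02697 — 4 statements merged into one kernel-verified Lean document; each statement's English description precedes it below -/
import Mathlib

section
/- Let A be a C*-algebra, B ⊆ A a masa, and α a *-automorphism of A. Then for every x ∈ F_{B,α}, the element x*x belongs to B and the element xx* belongs to α(B) = {α(b) : b ∈ B}. -/
/-- `F_{B,α} = {x ∈ A : x b = α(b) x for all b ∈ B}`. -/
def Fset {A : Type*} [Mul A] (B : Set A) (α : A → A) : Set A :=
  {x | ∀ b ∈ B, x * b = α b * x}

/-!
Taking adjoints of `x b* = α(b*) x` shows that `x*` intertwines `α(b)` back to `b`. Composing the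
two intertwiners, `x*x` commutes with every `b ∈ B` and `xx*` with every `α(b)`. Since `B` contains
its commutant and `α` is an automorphism, `α(B)` contains its own commutant as well.
-/

theorem image_centralizer_eq_centralizer_image {F M N : Type*} [Mul M] [Mul N] [EquivLike F M N]
    [MulEquivClass F M N] (f : F) (S : Set M) :
    f '' S.centralizer = (f '' S).centralizer := by
  ext y
  obtain ⟨c, rfl⟩ := EquivLike.surjective f y
  simp only [(EquivLike.injective f).mem_set_image, Set.mem_centralizer_iff, Set.forall_mem_image,
    ← map_mul, (EquivLike.injective f).eq_iff]

namespace Fset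

section Intertwining

variable {A F : Type*} [FunLike F A A] {B : Set A} {α : F} {x : A}

theorem semiconjBy_star [Mul A] [StarMul A] [StarHomClass F A A]
    (hB : ∀ b ∈ B, star b ∈ B) (hx : x ∈ Fset B α) {b : A} (hb : b ∈ B) :
    SemiconjBy (star x) (α b) b := by
  have h : SemiconjBy x (star b) (α (star b)) := hx (star b) (hB b hb)
  simpa only [map_star, star_star] using h.star_star_star

variable [Semigroup A] [StarMul A] [StarHomClass F A A]

theorem star_mul_self_mem_centralizer (hB : ∀ b ∈ B, star b ∈ B) (hx : x ∈ Fset B α) :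
    star x * x ∈ B.centralizer := fun b hb =>
  ((semiconjBy_star hB hx hb).mul_left (hx b hb)).eq.symm

theorem mul_star_self_mem_centralizer_image (hB : ∀ b ∈ B, star b ∈ B) (hx : x ∈ Fset B α) :
    x * star x ∈ (α '' B).centralizer := by
  rintro _ ⟨b, hb, rfl⟩
  have hxb : SemiconjBy x b (α b) := hx b hb
  exact (hxb.mul_left (semiconjBy_star hB hx hb)).eq.symm

end Intertwining

end Fset

theorem stmt1_general {A F : Type*} [Semigroup A] [StarMul A] [EquivLike F A A]
    [MulEquivClass F A A] [StarHomClass F A A] {B : Set A} (hB : ∀ b ∈ B, star b ∈ B)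
    (hBmax : B.centralizer ⊆ B) (α : F) {x : A} (hx : x ∈ Fset B α) :
    star x * x ∈ B ∧ x * star x ∈ α '' B := by
  refine ⟨hBmax (Fset.star_mul_self_mem_centralizer hB hx), Set.image_mono hBmax ?_⟩
  rw [image_centralizer_eq_centralizer_image]
  exact Fset.mul_star_self_mem_centralizer_image hB hx

/-- Let `A` be a C*-algebra, `B ⊆ A` a masa and `α` a *-automorphism of `A`.
Then for every `x ∈ F_{B,α}`, `x*x ∈ B` and `xx* ∈ α(B)`. -/
theorem stmt1 {A : Type*} [NonUnitalNormedRing A] [StarRing A] [CStarRing A]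
    [NormedSpace ℂ A] [IsScalarTower ℂ A A] [SMulCommClass ℂ A A]
    [CompleteSpace A] [StarModule ℂ A]
    (B : NonUnitalStarSubalgebra ℂ A)
    (hBcomm : ∀ b ∈ B, ∀ c ∈ B, b * c = c * b)
    (hBmax : ∀ a : A, (∀ b ∈ B, a * b = b * a) → a ∈ B)
    (α : A ≃⋆ₐ[ℂ] A)
    (x : A) (hx : x ∈ Fset (B : Set A) ⇑α) :
    star x * x ∈ B ∧ x * star x ∈ ⇑α '' (B : Set A) :=
  stmt1_general (fun _ => star_mem) (fun a ha => hBmax a fun b hb => (ha b hb).symm) α hx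
end

section
/- Let A be a unital C*-algebra, B ⊆ A a masa, and α a *-automorphism of A. Let x ∈ F_{B,α}, so that x*x ∈ B, and let f ∈ C(Spec(B), ℂ) denote the Gelfand transform of x*x (a nonnegative function). Then for every subset V of the open support {t ∈ Spec(B) : f(t) ≠ 0} that is clopen in Spec(B), there exists a partial isometry v ∈ F_{B,α} such that v*v ∈ B and the Gelfand transform of v*v equals the characteristic function of V. -/
open WeakDual
open scoped ComplexOrder

theorem mul_mem_Fset {A : Type*} [Semigroup A] {B : Set A} {α : A → A} {x b : A}
    (hx : x ∈ Fset B α) (hb : b ∈ B.centralizer) : x * b ∈ Fset B α := fun c hc => by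
  rw [mul_assoc, ← hb c hc, ← mul_assoc, hx c hc, mul_assoc]

theorem isClosed_of_maximal_commutative {M : Type*} [Mul M] [TopologicalSpace M]
    [SeparatelyContinuousMul M] [T2Space M] {B : Set M} (hcomm : ∀ b ∈ B, ∀ c ∈ B, b * c = c * b)
    (hmax : ∀ a : M, (∀ b ∈ B, a * b = b * a) → a ∈ B) : IsClosed B := by
  have hcentralizer : B.centralizer = B := Set.Subset.antisymm
    (fun a ha => hmax a fun b hb => (ha b hb).symm) (fun a ha b hb => hcomm b hb a ha)
  exact hcentralizer ▸ Set.isClosed_centralizer B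

theorem mul_star_mul_self_of_isIdempotentElem {E : Type*} [NonUnitalNormedRing E] [StarRing E]
    [CStarRing E] {v : E} (hv : IsIdempotentElem (star v * v)) : v * star v * v = v := by
  have hzero : star (v * star v * v - v) * (v * star v * v - v) = 0 := calc
    _ = star v * v * (star v * v) * (star v * v) - star v * v * (star v * v)
          - (star v * v * (star v * v) - star v * v) := by
      simp only [star_sub, star_mul, star_star]
      noncomm_ring
    _ = 0 := by simp only [hv.eq, sub_self]
  exact sub_eq_zero.mp ((CStarRing.star_mul_self_eq_zero_iff _).mp hzero)

theorem exists_star_mul_mul_eq_indicator {𝕜 X : Type*} [RCLike 𝕜] [TopologicalSpace X] {V : Set X}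
    (hV : IsClopen V) {f : X → 𝕜} (hf : ContinuousOn f V) (hpos : ∀ t ∈ V, 0 < f t) :
    ∃ g : C(X, 𝕜), ∀ t, star (g t) * f t * g t = V.indicator (fun _ => 1) t := by
  have hsqrt_ne : ∀ t ∈ V, √(RCLike.re (f t)) ≠ 0 := fun t ht =>
    (Real.sqrt_pos.mpr (RCLike.pos_iff.mp (hpos t ht)).1).ne'
  have hcont : Continuous (V.indicator fun t => (((√(RCLike.re (f t)))⁻¹ : ℝ) : 𝕜)) := by
    refine continuous_indicator (by simp [hV.frontier_eq]) ?_
    rw [hV.isClosed.closure_eq]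
    exact RCLike.continuous_ofReal.comp_continuousOn
      ((RCLike.continuous_re.comp_continuousOn hf).sqrt.inv₀ hsqrt_ne)
  refine ⟨⟨_, hcont⟩, fun t => ?_⟩
  by_cases ht : t ∈ V
  · obtain ⟨r, hr, hrt⟩ := RCLike.pos_iff_exists_ofReal.mp (hpos t ht)
    have hnormalized : (√r)⁻¹ * r * (√r)⁻¹ = 1 := by
      have hsqrt : √r ≠ 0 := (Real.sqrt_pos.mpr hr).ne'
      field_simp
      exact (Real.sq_sqrt hr.le).symm
    simp only [ContinuousMap.coe_mk, Set.indicator_of_mem ht, ← hrt, RCLike.ofReal_re,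
      RCLike.star_def, RCLike.conj_ofReal]
    exact_mod_cast hnormalized
  · simp [ht]

section CommCStarAlgebra

variable {D : Type*} [CommCStarAlgebra D] {V : Set (characterSpace ℂ D)}

theorem isIdempotentElem_of_forall_character_eq_indicator {p : D}
    (hp : ∀ φ : characterSpace ℂ D, φ p = V.indicator (fun _ => (1 : ℂ)) φ) :
    IsIdempotentElem p := by
  refine (gelfandStarTransform D).injective (ContinuousMap.ext fun φ => ?_)
  change φ (p * p) = φ p
  by_cases hφ : φ ∈ V <;> simp [hp, hφ]

theorem exists_forall_character_star_mul_mul_eq_indicator (hV : IsClopen V) {h : D}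
    (hpos : ∀ φ ∈ V, 0 < φ h) :
    ∃ b : D, ∀ φ : characterSpace ℂ D,
      φ (star b * h * b) = V.indicator (fun _ => (1 : ℂ)) φ := by
  obtain ⟨g, hg⟩ := exists_star_mul_mul_eq_indicator hV
    (gelfandTransform ℂ D h).continuous.continuousOn hpos
  obtain ⟨b, hb⟩ := (gelfandStarTransform D).surjective g
  have hφb (φ : characterSpace ℂ D) : φ b = g φ := DFunLike.congr_fun hb φ
  refine ⟨b, fun φ => ?_⟩
  rw [map_mul, map_mul, map_star, hφb]
  exact hg φ

end CommCStarAlgebra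

section CStarAlgebra

variable {A : Type*} [CStarAlgebra A] {B : StarSubalgebra ℂ A}

theorem character_star_mul_self_nonneg (hB : IsClosed (B : Set A)) {x : A}
    (hxx : star x * x ∈ B) (φ : characterSpace ℂ B) : 0 ≤ φ (⟨star x * x, hxx⟩ : B) := by
  let _ : PartialOrder A := CStarAlgebra.spectralOrder A
  have : StarOrderedRing A := CStarAlgebra.spectralOrderedRing A
  have : CompleteSpace B := hB.completeSpace_coe
  have hmem : φ (⟨star x * x, hxx⟩ : B) ∈ spectrum ℂ (star x * x) :=
    B.mem_spectrum_iff.mp (AlgHom.apply_mem_spectrum φ _)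
  exact spectrum_nonneg_of_nonneg (star_mul_self_nonneg x) hmem

theorem stmt4_general (hB : IsClosed (B : Set A)) (hcomm : ∀ b ∈ B, ∀ c ∈ B, b * c = c * b)
    {α : A → A} {x : A} (hx : x ∈ Fset (B : Set A) α) (hxx : star x * x ∈ B)
    {V : Set (characterSpace ℂ B)} (hV : IsClopen V)
    (hVsupp : ∀ φ ∈ V, φ (⟨star x * x, hxx⟩ : B) ≠ 0) :
    ∃ v ∈ Fset (B : Set A) α, v * star v * v = v ∧
      ∃ hvv : star v * v ∈ B, ∀ φ : characterSpace ℂ B,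
        φ (⟨star v * v, hvv⟩ : B) = V.indicator (fun _ => (1 : ℂ)) φ := by
  have : CompleteSpace B := hB.completeSpace_coe
  let _ : CommCStarAlgebra B := { mul_comm := fun a b => Subtype.ext (hcomm a a.2 b b.2) }
  obtain ⟨b, hb⟩ := exists_forall_character_star_mul_mul_eq_indicator hV fun φ hφ =>
    (character_star_mul_self_nonneg hB hxx φ).lt_of_ne' (hVsupp φ hφ)
  have hvv : ((star b * ⟨star x * x, hxx⟩ * b : B) : A) = star (x * b) * (x * b) := by
    simp [mul_assoc]
  have hidem : IsIdempotentElem (star (x * b) * (x * b)) :=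
    hvv ▸ (isIdempotentElem_of_forall_character_eq_indicator hb).map B.subtype
  refine ⟨x * b, mul_mem_Fset hx fun c hc => hcomm c hc b b.2,
    mul_star_mul_self_of_isIdempotentElem hidem, hvv ▸ SetLike.coe_mem _, fun φ => ?_⟩
  rw [← hb φ]
  exact congrArg φ (Subtype.ext hvv.symm)

end CStarAlgebra

/-- Let `A` be a unital C*-algebra, `B ⊆ A` a masa and `α` a
*-automorphism of `A`. Let `x ∈ F_{B,α}` (so `x*x ∈ B`) and let `f` be the Gelfand
transform of `x*x`, i.e. the function `φ ↦ φ(x*x)` on the character space of `B`.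
Then for every subset `V` of the open support `{φ : f(φ) ≠ 0}` that is clopen in
`Spec(B)`, there is a partial isometry `v ∈ F_{B,α}` with `v*v ∈ B` whose Gelfand
transform is the characteristic function of `V`. -/
theorem stmt4 {A : Type*} [NormedRing A] [StarRing A] [CStarRing A]
    [NormedAlgebra ℂ A] [CompleteSpace A] [StarModule ℂ A]
    (B : StarSubalgebra ℂ A)
    (hBcomm : ∀ b ∈ B, ∀ c ∈ B, b * c = c * b)
    (hBmax : ∀ a : A, (∀ b ∈ B, a * b = b * a) → a ∈ B)
    (α : A ≃⋆ₐ[ℂ] A)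
    (x : A) (hx : x ∈ Fset (B : Set A) ⇑α) (hxx : star x * x ∈ B)
    (V : Set (WeakDual.characterSpace ℂ B)) (hV : IsClopen V)
    (hVsupp : ∀ φ ∈ V, (φ : WeakDual.characterSpace ℂ B) (⟨star x * x, hxx⟩ : B) ≠ 0) :
    ∃ v ∈ Fset (B : Set A) ⇑α, v * star v * v = v ∧
      ∃ hvv : star v * v ∈ B,
        ∀ φ : WeakDual.characterSpace ℂ B,
          (φ : WeakDual.characterSpace ℂ B) (⟨star v * v, hvv⟩ : B)
            = V.indicator (fun _ => (1 : ℂ)) φ := by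
  let _ : CStarAlgebra A := {}
  exact stmt4_general (isClosed_of_maximal_commutative hBcomm hBmax) hBcomm hx hxx hV hVsupp
end

section
/- Let A be a unital C*-algebra, B ⊆ A a masa whose spectrum Spec(B) is totally disconnected, and α a *-automorphism of A. If F_{B,α} ≠ {0}, then F_{B,α} contains a nonzero partial isometry. -/
open WeakDual

namespace Fset

section Semigroup

variable {A : Type*} [Semigroup A] {s : Set A} {α : A → A} {x c : A}

theorem mul_mem_of_mem_centralizer (hx : x ∈ Fset s α) (hc : c ∈ s.centralizer) :
    x * c ∈ Fset s α := fun b hb =>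
  calc x * c * b = x * b * c := by rw [mul_assoc, ← hc b hb, mul_assoc]
    _ = α b * (x * c) := by rw [hx b hb, mul_assoc]

end Semigroup

section Star

variable {A S F : Type*} [Semigroup A] [StarMul A] [SetLike S A] [StarMemClass S A]
  [FunLike F A A] [StarHomClass F A A] {s : S} {α : F} {x y : A}

theorem star_mul_apply (hx : x ∈ Fset (s : Set A) α) {b : A} (hb : b ∈ s) :
    star x * α b = b * star x := by
  simpa only [star_mul, map_star, star_star] using
    (congrArg star (hx (star b) (star_mem hb))).symm

theorem star_mul_mem_centralizer (hx : x ∈ Fset (s : Set A) α) (hy : y ∈ Fset (s : Set A) α) :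
    star x * y ∈ (s : Set A).centralizer := fun b hb =>
  calc b * (star x * y) = star x * (α b * y) := by
        rw [← mul_assoc, ← star_mul_apply hx hb, mul_assoc]
    _ = star x * y * b := by rw [← hy b hb, mul_assoc]

end Star

theorem cfcAbs_mem_centralizer {A S F : Type*} [NonUnitalCStarAlgebra A] [PartialOrder A]
    [StarOrderedRing A] [SetLike S A] [StarMemClass S A] [FunLike F A A] [StarHomClass F A A]
    {s : S} {α : F} {x : A} (hx : x ∈ Fset (s : Set A) α) :
    CFC.abs x ∈ (s : Set A).centralizer := fun b hb =>
  have hcomm : Commute (star x * x) b := (star_mul_mem_centralizer hx hx b hb).symm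
  (hcomm.cfcₙ_nnreal NNReal.sqrt).symm

end Fset

section StarMul

variable {A : Type*} [Semigroup A] [StarMul A] {x a d : A}

theorem star_mul_self_mul_right_congr (h : star x * x = star a * a) (d : A) :
    star (x * d) * (x * d) = star (a * d) * (a * d) :=
  calc star (x * d) * (x * d) = star d * (star x * x) * d := by simp only [star_mul, mul_assoc]
    _ = star d * (star a * a) * d := by rw [h]
    _ = star (a * d) * (a * d) := by simp only [star_mul, mul_assoc]

theorem mul_star_mul_self_of_isStarProjection (h : star x * x = star a * a)
    (hp : IsStarProjection (a * d)) (hd : d * a * d = d) :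
    x * d * star (x * d) * (x * d) = x * d :=
  calc x * d * star (x * d) * (x * d) = x * d * (star (a * d) * (a * d)) := by
        rw [mul_assoc, star_mul_self_mul_right_congr h]
    _ = x * (d * a * d) := by
        rw [hp.isSelfAdjoint.star_eq, hp.isIdempotentElem.eq]; simp only [mul_assoc]
    _ = x * d := by rw [hd]

end StarMul

theorem exists_continuousMap_mul_mul_eq_self {X 𝕜 : Type*} [TopologicalSpace X] [CompactSpace X]
    [T2Space X] [TotallyDisconnectedSpace X] [GroupWithZero 𝕜] [TopologicalSpace 𝕜] [T1Space 𝕜]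
    [ContinuousMul 𝕜] [ContinuousInv₀ 𝕜] {f : C(X, 𝕜)} (hf : f ≠ 0) :
    ∃ g : C(X, 𝕜), g ≠ 0 ∧ g * f * g = g := by
  obtain ⟨x₀, hx₀⟩ : ∃ x, f x ≠ 0 := DFunLike.ne_iff.1 hf
  obtain ⟨K, hK, hx₀K, hKf⟩ :=
    compact_exists_isClopen_in_isOpen (isOpen_ne.preimage f.continuous) hx₀
  have hcont : Continuous (K.indicator fun x => (f x)⁻¹) := by
    refine continuous_indicator (by simp [hK.frontier_eq]) ?_
    rw [hK.isClosed.closure_eq]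
    exact f.continuous.continuousOn.inv₀ hKf
  refine ⟨⟨_, hcont⟩, DFunLike.ne_iff.2 ⟨x₀, ?_⟩, ContinuousMap.ext fun x => ?_⟩
  · simpa [hx₀K] using hx₀
  · by_cases hx : x ∈ K
    · simp [hx, inv_mul_cancel₀ (hKf hx)]
    · simp [hx]

theorem exists_isStarProjection_mul_of_totallyDisconnectedSpace {C : Type*} [CommCStarAlgebra C]
    [TotallyDisconnectedSpace (characterSpace ℂ C)] {a : C} (ha : a ≠ 0) :
    ∃ d : C, d ≠ 0 ∧ d * a * d = d ∧ IsStarProjection (a * d) := by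
  let Γ := gelfandStarTransform C
  obtain ⟨g, hg0, hg⟩ := exists_continuousMap_mul_mul_eq_self
    ((map_ne_zero_iff Γ (EquivLike.injective Γ)).2 ha)
  have hd : Γ.symm g * a * Γ.symm g = Γ.symm g := by
    simpa only [map_mul, StarAlgEquiv.symm_apply_apply] using congrArg Γ.symm hg
  have hidem : IsIdempotentElem (a * Γ.symm g) := by
    rw [IsIdempotentElem, mul_assoc, ← mul_assoc (Γ.symm g), hd]
  exact ⟨Γ.symm g, (map_ne_zero_iff Γ.symm (EquivLike.injective Γ.symm)).2 hg0, hd,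
    isStarProjection_iff_isIdempotentElem_and_isStarNormal.2 ⟨hidem, inferInstance⟩⟩

/-- A masa: a maximal abelian self-adjoint subalgebra, expressed as a star subalgebra
that equals its relative commutant. -/
def IsMasa {R A : Type*} [CommSemiring R] [StarRing R] [Semiring A] [StarRing A] [Algebra R A]
    [StarModule R A] (B : StarSubalgebra R A) : Prop :=
  (B : Set A).centralizer = B

section Algebra

variable {R A : Type*} [CommSemiring R] [StarRing R] [Semiring A] [StarRing A] [Algebra R A]
  [StarModule R A] {B : StarSubalgebra R A}

theorem isMasa_iff : IsMasa B ↔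
    (∀ b ∈ B, ∀ c ∈ B, b * c = c * b) ∧ ∀ a : A, (∀ b ∈ B, a * b = b * a) → a ∈ B := by
  refine ⟨fun h => ⟨fun b hb c hc => ?_, fun a ha => ?_⟩, fun ⟨hcomm, hmax⟩ => ?_⟩
  · exact (h.symm.subset hc : c ∈ (B : Set A).centralizer) b hb
  · exact h.subset fun b hb => (ha b hb).symm
  · exact Set.Subset.antisymm (fun a ha => hmax a fun b hb => (ha b hb).symm)
      fun c hc b hb => hcomm b hb c hc

theorem IsMasa.isClosed [TopologicalSpace A] [ContinuousMul A] [T2Space A] (hB : IsMasa B) :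
    IsClosed (B : Set A) :=
  hB ▸ Set.isClosed_centralizer _

end Algebra

section CStarAlgebra

variable {A : Type*} [CStarAlgebra A] {B : StarSubalgebra ℂ A}

/-- A masa of a C⋆-algebra as a commutative C⋆-algebra, with the norm, algebra and star structure of
the ambient algebra, so that Gelfand duality applies to it. -/
noncomputable abbrev IsMasa.commCStarAlgebra (hB : IsMasa B) : CommCStarAlgebra B :=
  have : IsClosed (B : Set A) := hB.isClosed
  { StarSubalgebra.cstarAlgebra B with
    mul_comm := fun b c => Subtype.ext ((isMasa_iff.1 hB).1 b b.2 c c.2) }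

theorem IsMasa.exists_isStarProjection_mul (hB : IsMasa B)
    [TotallyDisconnectedSpace (characterSpace ℂ B)] {a : A} (haB : a ∈ B) (ha : a ≠ 0) :
    ∃ d ∈ B, d ≠ 0 ∧ d * a * d = d ∧ IsStarProjection (a * d) := by
  let := hB.commCStarAlgebra
  obtain ⟨d, hd0, hd, hp⟩ := exists_isStarProjection_mul_of_totallyDisconnectedSpace
    (a := (⟨a, haB⟩ : B)) (Subtype.coe_ne_coe.1 ha)
  exact ⟨d, d.2, Subtype.coe_ne_coe.2 hd0, congrArg Subtype.val hd, hp.map B.subtype⟩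

theorem stmt5_general {F : Type*} [FunLike F A A] [StarHomClass F A A]
    (hB : IsMasa B) [TotallyDisconnectedSpace (characterSpace ℂ B)] (α : F)
    (hF : ∃ x ∈ Fset (B : Set A) α, x ≠ 0) :
    ∃ v ∈ Fset (B : Set A) α, v ≠ 0 ∧ v * star v * v = v := by
  let := CStarAlgebra.spectralOrder A
  have := CStarAlgebra.spectralOrderedRing A
  obtain ⟨x, hx, hx0⟩ := hF
  have habs : star x * x = star (CFC.abs x) * CFC.abs x := by
    rw [(CFC.abs_nonneg x).isSelfAdjoint.star_eq, CFC.abs_mul_abs]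
  have habsB : CFC.abs x ∈ B := hB.subset (Fset.cfcAbs_mem_centralizer hx)
  obtain ⟨d, hdB, hd0, hd, hp⟩ :=
    hB.exists_isStarProjection_mul habsB (CFC.abs_eq_zero_iff.not.2 hx0)
  refine ⟨x * d, Fset.mul_mem_of_mem_centralizer hx (hB.symm.subset hdB), fun hxd => hd0 ?_,
    mul_star_mul_self_of_isStarProjection habs hp hd⟩
  have had : CFC.abs x * d = 0 := by
    rw [← CStarRing.star_mul_self_eq_zero_iff, ← star_mul_self_mul_right_congr habs, hxd, mul_zero]
  rw [← hd, mul_assoc, had, mul_zero]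

end CStarAlgebra

/-- Let `A` be a unital C*-algebra, `B ⊆ A` a masa whose spectrum
(character space) is totally disconnected, and `α` a *-automorphism of `A`.
If `F_{B,α} ≠ {0}`, then `F_{B,α}` contains a nonzero partial isometry. -/
theorem stmt5 {A : Type*} [NormedRing A] [StarRing A] [CStarRing A]
    [NormedAlgebra ℂ A] [CompleteSpace A] [StarModule ℂ A]
    (B : StarSubalgebra ℂ A)
    (hBcomm : ∀ b ∈ B, ∀ c ∈ B, b * c = c * b)
    (hBmax : ∀ a : A, (∀ b ∈ B, a * b = b * a) → a ∈ B)
    (htd : TotallyDisconnectedSpace (WeakDual.characterSpace ℂ B))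
    (α : A ≃⋆ₐ[ℂ] A)
    (hF : ∃ x ∈ Fset (B : Set A) ⇑α, x ≠ 0) :
    ∃ v ∈ Fset (B : Set A) ⇑α, v ≠ 0 ∧ v * star v * v = v := by
  let : CStarAlgebra A := { }
  exact stmt5_general (isMasa_iff.2 ⟨hBcomm, hBmax⟩) α hF
end

section
/- Let A be a C*-algebra, B ⊆ A a masa, and α a *-automorphism of A with α^n = id_A for some n ≥ 1. For every partial isometry v ∈ F_{B,α}, the element c := α^{n-1}(v)·α^{n-2}(v)⋯α(v)·v (the product with α^{n-1}(v) leftmost) belongs to B and satisfies c·c* = c*·c = v*v. -/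
/-- The product `α^m(v) ⋯ α(v) v` along the orbit of `v`, which is `c` for `m = n - 1`. It is
indexed so that `orbitProd α v m` has `m + 1` factors, because `A` need not have a unit. -/
def orbitProd {A : Type*} [Mul A] (α : A → A) (v : A) : ℕ → A
  | 0 => v
  | m + 1 => α^[m + 1] v * orbitProd α v m

lemma foldr_mul_map_range_eq_orbitProd {A : Type*} [Mul A] (α : A → A) (v : A) (m : ℕ) :
    ((List.range m).map (fun k => α^[m - k] v)).foldr (· * ·) v = orbitProd α v m := by
  induction m with
  | zero => rfl
  | succ m ih =>
    simp only [List.range_succ_eq_map, List.map_cons, List.map_map, Function.comp_def,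
      List.foldr_cons, Nat.succ_eq_add_one, Nat.add_sub_add_right, Nat.sub_zero, ih, orbitProd]

section Semigroup

variable {A F : Type*} [Semigroup A] [FunLike F A A] [MulHomClass F A A]

lemma semiconjBy_iterate_map {v x y : A} (h : SemiconjBy v x y) (α : F) (k : ℕ) :
    SemiconjBy ((⇑α)^[k] v) ((⇑α)^[k] x) ((⇑α)^[k] y) := by
  simpa only [SemiconjBy, iterate_map_mul] using congrArg (⇑α)^[k] h

lemma semiconjBy_orbitProd {α : F} {v b : A} (h : SemiconjBy v b (α b)) (m : ℕ) :
    SemiconjBy (orbitProd α v m) b ((⇑α)^[m + 1] b) := by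
  induction m with
  | zero => exact h
  | succ m ih => exact (semiconjBy_iterate_map h α (m + 1)).mul_left ih

end Semigroup

section StarMul

variable {A : Type*} [Semigroup A] [StarMul A]

lemma star_mul_self_mem_centralizer {B : Set A} (hBstar : ∀ b ∈ B, star b ∈ B) {F : Type*}
    [FunLike F A A] [StarHomClass F A A] {α : F} {v : A} (hv : v ∈ Fset B α) :
    star v * v ∈ B.centralizer := by
  intro b hb
  have hvb : SemiconjBy v b (α b) := hv b hb
  have hstar : SemiconjBy (star v) (α b) b := by
    have hvb' : SemiconjBy v (star b) (α (star b)) := hv (star b) (hBstar b hb)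
    simpa only [map_star, star_star] using hvb'.star_star_star
  exact (hstar.mul_left hvb).eq.symm

lemma star_orbitProd_mul_self {F : Type*} [FunLike F A A] [MulHomClass F A A] [StarHomClass F A A]
    {α : F} {v : A} (hv : SemiconjBy v (star v * v) (α (star v * v)))
    (hpi : v * star v * v = v) (m : ℕ) :
    star (orbitProd α v m) * orbitProd α v m = star v * v := by
  induction m with
  | zero => rfl
  | succ m ih =>
    have hidem : IsIdempotentElem (star v * v) := by
      rw [IsIdempotentElem, mul_assoc, ← mul_assoc v, hpi]
    have hstar : star ((⇑α)^[m + 1] v) = (⇑α)^[m + 1] (star v) :=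
      Function.Semiconj.iterate_right (fun a => (map_star α a).symm) (m + 1) v
    calc star (orbitProd α v (m + 1)) * orbitProd α v (m + 1)
        = star (orbitProd α v m) * ((⇑α)^[m + 1] (star v * v) * orbitProd α v m) := by
          simp only [orbitProd, star_mul, hstar, iterate_map_mul, mul_assoc]
      _ = star (orbitProd α v m) * orbitProd α v m * (star v * v) := by
          rw [← (semiconjBy_orbitProd hv m).eq, mul_assoc]
      _ = star v * v := by rw [ih, hidem.eq]

theorem stmt6_general {B : Set A} (hBstar : ∀ b ∈ B, star b ∈ B) (hBmax : B.centralizer ⊆ B)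
    {F : Type*} [FunLike F A A] [MulHomClass F A A] [StarHomClass F A A] {α : F} {m : ℕ}
    (hα : ∀ b ∈ B, (⇑α)^[m + 1] b = b) {v : A} (hv : v ∈ Fset B α) (hpi : v * star v * v = v) :
    orbitProd α v m ∈ B ∧ orbitProd α v m * star (orbitProd α v m) = star v * v ∧
      star (orbitProd α v m) * orbitProd α v m = star v * v := by
  have hcomm : orbitProd α v m ∈ B.centralizer := fun b hb => by
    simpa only [SemiconjBy, hα b hb] using (semiconjBy_orbitProd (hv b hb) m).symm
  have hmem : orbitProd α v m ∈ B := hBmax hcomm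
  have hinit : star v * v ∈ B := hBmax (star_mul_self_mem_centralizer hBstar hv)
  have hstar_mul := star_orbitProd_mul_self (hv _ hinit) hpi m
  exact ⟨hmem, (hcomm _ (hBstar _ hmem)).symm.trans hstar_mul, hstar_mul⟩

end StarMul

/-- Let `A` be a C*-algebra, `B ⊆ A` a masa and `α` a *-automorphism
of `A` with `α^n = id` for some `n ≥ 1`. For every partial isometry `v ∈ F_{B,α}`, the
element `c := α^{n-1}(v)·α^{n-2}(v)⋯α(v)·v` (leftmost factor `α^{n-1}(v)`, encoded as a fold
since `A` need not be unital) belongs to `B`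
and satisfies `c c* = c* c = v* v`. -/
theorem stmt6 {A : Type*} [NonUnitalNormedRing A] [StarRing A] [CStarRing A]
    [NormedSpace ℂ A] [IsScalarTower ℂ A A] [SMulCommClass ℂ A A]
    [CompleteSpace A] [StarModule ℂ A]
    (B : NonUnitalStarSubalgebra ℂ A)
    (hBcomm : ∀ b ∈ B, ∀ c ∈ B, b * c = c * b)
    (hBmax : ∀ a : A, (∀ b ∈ B, a * b = b * a) → a ∈ B)
    (α : A ≃⋆ₐ[ℂ] A) (n : ℕ) (hn : 1 ≤ n) (hα : ∀ a : A, (⇑α)^[n] a = a)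
    (v : A) (hv : v ∈ Fset (B : Set A) ⇑α) (hpi : v * star v * v = v)
    (c : A) (hc : c = ((List.range (n - 1)).map (fun k => (⇑α)^[n - 1 - k] v)).foldr (· * ·) v) :
    c ∈ B ∧ c * star c = star v * v ∧ star c * c = star v * v := by
  rw [hc, foldr_mul_map_range_eq_orbitProd]
  exact stmt6_general (fun _ => star_mem) (fun a ha => hBmax a fun b hb => (ha b hb).symm)
    (fun b _ => by rw [Nat.sub_add_cancel hn, hα]) hv hpi
end
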